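/- Every code C ⊆ {0,1}^7 with |C| = 18 and d_Z(a,b) ≥ 2 for all distinct a, b ∈ C has at most 48 free points. -/

import Mathlib

/-- Hamming weight of a binary word: the number of ones. -/
def wt {n : ℕ} (a : Fin n → Bool) : ℕ :=
  (Finset.univ.filter (fun i => a i = true)).card

/-- N(a,b) = number of positions where a is 0 and b is 1. -/
def NN {n : ℕ} (a b : Fin n → Bool) : ℕ :=
  (Finset.univ.filter (fun i => a i = false ∧ b i = true)).card

/-- The Z-distance d_Z(a,b) = max(N(a,b), N(b,a)). -/
def dZ {n : ℕ} (a b : Fin n → Bool) : ℕ := max (NN a b) (NN b a)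

/-- A code correcting one asymmetric error: d_Z(a,b) ≥ 2 for distinct codewords. -/
def IsZCode {n : ℕ} (C : Finset (Fin n → Bool)) : Prop :=
  ∀ a ∈ C, ∀ b ∈ C, a ≠ b → 2 ≤ dZ a b

/-- The output ball B_1(a): words obtainable from a by at most one asymmetric (1→0) error. -/
def ball {n : ℕ} (a : Fin n → Bool) : Finset (Fin n → Bool) :=
  Finset.univ.filter (fun y => (∀ i, y i ≤ a i) ∧ wt a - wt y ≤ 1)

/-- The number of free points of a code: words lying in no ball B_1(a), a ∈ C. -/
def freeCount {n : ℕ} (C : Finset (Fin n → Bool)) : ℕ :=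
  (Finset.univ.filter (fun y => ∀ a ∈ C, y ∉ ball a)).card

/-- A two-stage coding algorithm (c1, c2, dec) of lengths n1, n2 with message set `Fin M`
is successful if it correctly decodes under at most one asymmetric error in total. -/
def TwoStageSuccess (n1 n2 M : ℕ)
    (c1 : Fin M → (Fin n1 → Bool))
    (c2 : Fin M → (Fin n1 → Bool) → (Fin n2 → Bool))
    (dec : (Fin n1 → Bool) → (Fin n2 → Bool) → Fin M) : Prop :=
  ∀ (m : Fin M) (y1 : Fin n1 → Bool) (y2 : Fin n2 → Bool),
    (∀ i, y1 i ≤ c1 m i) → (∀ i, y2 i ≤ c2 m y1 i) →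
    (wt (c1 m) - wt y1) + (wt (c2 m y1) - wt y2) ≤ 1 →
    dec y1 y2 = m

/-!
The balls `B₁(c)`, `c ∈ C`, are disjoint of size `wt c + 1`, so a code whose words carry many ones
has few free points: 18 codewords of length 7 with 62 ones in total leave `2 ^ 7 - (62 + 18) = 48`.

Distinct codewords of weight at most `k` share at most `k - 2` ones. Hence there is at most one
codeword of weight at most 1, those of weight 2 are disjoint, and those of weight 2 and 3 through a
given position are disjoint elsewhere. In length 7 this leaves room for at most `1 + 3 + 5 = 9`
light codewords (weight at most 3), with equality only for the distribution `(1, 3, 5)`.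
Complementing every word preserves the code property, so 18 codewords force this distribution on
both halves, and the weights add up to at least `0 + 3 * 2 + 5 * 3 + 5 * 4 + 3 * 5 + 6 = 62`.
-/

open Finset
open scoped FinsetFamily

section Support

variable {n : ℕ} {a b : Fin n → Bool}

/-- The support of a word, i.e. the set of positions of its ones. Through it, weights and distances
become cardinalities of finite sets. -/
def supp (a : Fin n → Bool) : Finset (Fin n) := {i | a i = true}

@[simp]
lemma mem_supp {i : Fin n} : i ∈ supp a ↔ a i = true := by simp [supp]

lemma supp_injective : Function.Injective (supp (n := n)) := fun a b h ↦
  funext fun i ↦ Bool.eq_iff_iff.2 (by simpa using Finset.ext_iff.1 h i)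

lemma supp_subset_supp : supp a ⊆ supp b ↔ a ≤ b := by
  simp [subset_iff, Pi.le_def, Bool.le_iff_imp]

lemma supp_compl (a : Fin n → Bool) : supp aᶜ = (supp a)ᶜ := by
  ext i
  simp

lemma supp_update_false (a : Fin n → Bool) (i : Fin n) :
    supp (Function.update a i false) = (supp a).erase i := by
  ext j
  by_cases hj : j = i <;> simp [hj]

lemma wt_eq_card_supp (a : Fin n → Bool) : wt a = #(supp a) := rfl

lemma NN_eq_card_sdiff (a b : Fin n → Bool) : NN a b = #(supp b \ supp a) := by
  rw [NN]
  congr 1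
  ext i
  simp [and_comm]

lemma wt_le_length (a : Fin n → Bool) : wt a ≤ n := (card_le_univ _).trans_eq (Fintype.card_fin n)

lemma wt_compl (a : Fin n → Bool) : wt aᶜ = n - wt a := by
  rw [wt_eq_card_supp, supp_compl, card_compl, Fintype.card_fin, wt_eq_card_supp]

lemma NN_compl_compl (a b : Fin n → Bool) : NN aᶜ bᶜ = NN b a := by
  rw [NN_eq_card_sdiff, NN_eq_card_sdiff, supp_compl, supp_compl, compl_sdiff_compl]

lemma dZ_compl_compl (a b : Fin n → Bool) : dZ aᶜ bᶜ = dZ a b := by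
  rw [dZ, dZ, NN_compl_compl, NN_compl_compl, max_comm]

lemma NN_add_card_supp_inter (a b : Fin n → Bool) : NN a b + #(supp a ∩ supp b) = wt b := by
  rw [NN_eq_card_sdiff, inter_comm, card_sdiff_add_card_inter, wt_eq_card_supp]

end Support

section Ball

variable {n : ℕ} {a b y : Fin n → Bool}

lemma mem_ball_iff_supp : y ∈ ball a ↔ supp y ⊆ supp a ∧ #(supp a \ supp y) ≤ 1 := by
  simp only [ball, mem_filter, mem_univ, true_and, wt_eq_card_supp, ← Pi.le_def,
    ← supp_subset_supp]
  exact and_congr_right fun h ↦ by rw [card_sdiff_of_subset h]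

lemma ball_eq_insert_image_update (a : Fin n → Bool) :
    ball a = insert a ((supp a).image fun i ↦ Function.update a i false) := by
  ext y
  simp only [mem_ball_iff_supp, mem_insert, mem_image, ← supp_injective.eq_iff (a := y),
    ← supp_injective.eq_iff (b := y), supp_update_false]
  constructor
  · rintro ⟨hsub, hcard⟩
    obtain hzero | hone := Nat.le_one_iff_eq_zero_or_eq_one.1 hcard
    · exact .inl (hsub.antisymm (sdiff_eq_empty_iff_subset.1 (card_eq_zero.1 hzero)))
    · obtain ⟨i, hi⟩ := card_eq_one.1 hone
      refine .inr ⟨i, (mem_sdiff.1 (hi ▸ mem_singleton_self i)).1, ?_⟩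
      rw [erase_eq, ← hi, Finset.sdiff_sdiff_eq_self hsub]
  · rintro (h | ⟨i, hi, h⟩)
    · simp [h]
    · rw [← h]
      exact ⟨erase_subset _ _, by simp [sdiff_erase hi]⟩

lemma card_ball (a : Fin n → Bool) : #(ball a) = wt a + 1 := by
  have hinj : Set.InjOn (fun i ↦ Function.update a i false) (supp a) := fun i hi j hj hij ↦
    erase_injOn (supp a) hi hj (by simpa only [supp_update_false] using congrArg supp hij)
  have ha : a ∉ (supp a).image fun i ↦ Function.update a i false := by
    intro h
    obtain ⟨i, hi, hia⟩ := mem_image.1 h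
    rw [← hia] at hi
    simp at hi
  rw [ball_eq_insert_image_update, card_insert_of_notMem ha, card_image_of_injOn hinj,
    wt_eq_card_supp]

lemma NN_le_one_of_mem_ball (hya : y ∈ ball a) (hyb : y ∈ ball b) : NN a b ≤ 1 := by
  rw [mem_ball_iff_supp] at hya hyb
  exact (NN_eq_card_sdiff a b).trans_le
    ((card_le_card (sdiff_subset_sdiff subset_rfl hya.1)).trans hyb.2)

lemma freeCount_add_card_biUnion_ball (C : Finset (Fin n → Bool)) :
    freeCount C + #(C.biUnion ball) = 2 ^ n := by
  have hfree : freeCount C = #(C.biUnion ball)ᶜ := by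
    rw [freeCount]
    congr 1
    ext y
    simp
  rw [hfree, card_compl_add_card, Fintype.card_fun, Fintype.card_bool, Fintype.card_fin]

end Ball

section Counting

variable {n : ℕ}

lemma sum_wt_le_of_card_through_le {D : Finset (Fin n → Bool)} {k : ℕ}
    (h : ∀ v, #{c ∈ D | v ∈ supp c} ≤ k) : ∑ c ∈ D, wt c ≤ n * k := by
  calc ∑ c ∈ D, wt c = ∑ v, #{c ∈ D | v ∈ supp c} := by
        simp only [wt, card_filter, mem_supp]
        exact sum_comm
    _ ≤ ∑ _v : Fin n, k := sum_le_sum fun v _ ↦ h v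
    _ = n * k := by simp

lemma sum_filter_wt_eq (C : Finset (Fin n → Bool)) (k : ℕ) (f : ℕ → ℕ) :
    ∑ c ∈ C with wt c = k, f (wt c) = f k * #{c ∈ C | wt c = k} := by
  rw [sum_congr rfl fun c hc ↦ congrArg f (mem_filter.1 hc).2, sum_const, smul_eq_mul, mul_comm]

lemma sum_filter_wt_le_three {M : Type*} [AddCommMonoid M] (C : Finset (Fin n → Bool))
    (f : (Fin n → Bool) → M) :
    ∑ c ∈ C with wt c ≤ 3, f c =
      ∑ c ∈ C with wt c ≤ 1, f c + ∑ c ∈ C with wt c = 2, f c + ∑ c ∈ C with wt c = 3, f c := by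
  simp only [sum_filter, ← sum_add_distrib]
  refine sum_congr rfl fun c _ ↦ ?_
  grind

lemma card_filter_wt_le_three (C : Finset (Fin n → Bool)) :
    #{c ∈ C | wt c ≤ 3} = #{c ∈ C | wt c ≤ 1} + #{c ∈ C | wt c = 2} + #{c ∈ C | wt c = 3} := by
  simpa only [card_eq_sum_ones] using sum_filter_wt_le_three C fun _ ↦ 1

lemma sum_filter_wt_compl {M : Type*} [AddCommMonoid M] (C : Finset (Fin n → Bool))
    (p : ℕ → Prop) [DecidablePred p] (f : ℕ → M) :
    ∑ c ∈ Cᶜˢ with p (wt c), f (wt c) = ∑ c ∈ C with p (n - wt c), f (n - wt c) := by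
  rw [← image_compl, filter_image, sum_image compl_injective.injOn]
  simp only [wt_compl]

lemma sum_eq_sum_light_add_sum_compls_light {M : Type*} [AddCommMonoid M] {k : ℕ}
    (hn : n = 2 * k + 1) (C : Finset (Fin n → Bool)) (f : ℕ → M) :
    ∑ c ∈ C, f (wt c) =
      ∑ c ∈ C with wt c ≤ k, f (wt c) + ∑ c ∈ Cᶜˢ with wt c ≤ k, f (n - wt c) := by
  rw [sum_filter_wt_compl C (· ≤ k) fun w ↦ f (n - w),
    ← sum_filter_add_sum_filter_not C (wt · ≤ k)]
  congr 1
  refine sum_congr (filter_congr fun c _ ↦ by omega) fun c _ ↦ ?_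
  rw [Nat.sub_sub_self (wt_le_length c)]

lemma card_eq_card_light_add_card_compls_light {k : ℕ} (hn : n = 2 * k + 1)
    (C : Finset (Fin n → Bool)) :
    #C = #{c ∈ C | wt c ≤ k} + #{c ∈ Cᶜˢ | wt c ≤ k} := by
  simpa only [card_eq_sum_ones] using sum_eq_sum_light_add_sum_compls_light hn C fun _ ↦ 1

end Counting

namespace IsZCode

variable {n : ℕ} {C : Finset (Fin n → Bool)}

protected lemma compls (hC : IsZCode C) : IsZCode Cᶜˢ := by
  intro a ha b hb hab
  rw [← dZ_compl_compl]
  exact hC aᶜ (mem_compls.1 ha) bᶜ (mem_compls.1 hb) (compl_injective.ne hab)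

lemma pairwiseDisjoint_ball (hC : IsZCode C) : (C : Set (Fin n → Bool)).PairwiseDisjoint ball := by
  intro a ha b hb hab
  refine disjoint_left.2 fun y hya hyb ↦ ?_
  have hdist : dZ a b ≤ 1 :=
    max_le (NN_le_one_of_mem_ball hya hyb) (NN_le_one_of_mem_ball hyb hya)
  exact absurd (hC a ha b hb hab) (by omega)

lemma freeCount_add_sum_wt_add_card (hC : IsZCode C) :
    freeCount C + (∑ c ∈ C, wt c + #C) = 2 ^ n := by
  rw [← freeCount_add_card_biUnion_ball C, card_biUnion hC.pairwiseDisjoint_ball,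
    card_eq_sum_ones, ← sum_add_distrib]
  simp only [card_ball]

lemma card_supp_inter_add_two_le (hC : IsZCode C) {a b : Fin n → Bool} (ha : a ∈ C) (hb : b ∈ C)
    (hab : a ≠ b) : #(supp a ∩ supp b) + 2 ≤ max (wt a) (wt b) := by
  have hdist : 2 ≤ max (NN a b) (NN b a) := hC a ha b hb hab
  have hwb := NN_add_card_supp_inter a b
  have hwa := NN_add_card_supp_inter b a
  rw [inter_comm] at hwa
  omega

lemma card_wt_le_one_le_one (hC : IsZCode C) : #{c ∈ C | wt c ≤ 1} ≤ 1 := by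
  refine card_le_one.2 fun a ha b hb ↦ by_contra fun hab ↦ ?_
  rw [mem_filter] at ha hb
  have := hC.card_supp_inter_add_two_le ha.1 hb.1 hab
  omega

lemma pairwiseDisjoint_supp_wt_le_two (hC : IsZCode C) :
    (({c ∈ C | wt c ≤ 2} : Finset _) : Set (Fin n → Bool)).PairwiseDisjoint supp := by
  intro a ha b hb hab
  rw [mem_coe, mem_filter] at ha hb
  have := hC.card_supp_inter_add_two_le ha.1 hb.1 hab
  exact disjoint_iff_inter_eq_empty.2 (card_eq_zero.1 (by omega))

lemma card_wt_le_two_through_le_one (hC : IsZCode C) (v : Fin n) :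
    #{c ∈ C | wt c ≤ 2 ∧ v ∈ supp c} ≤ 1 := by
  rw [← filter_filter]
  refine card_le_one.2 fun a ha b hb ↦ ?_
  rw [mem_filter] at ha hb
  exact hC.pairwiseDisjoint_supp_wt_le_two.elim_finset ha.1 hb.1 v ha.2 hb.2

lemma pairwiseDisjoint_supp_erase_wt_le_three (hC : IsZCode C) (v : Fin n) :
    (({c ∈ C | wt c ≤ 3 ∧ v ∈ supp c} : Finset _) : Set (Fin n → Bool)).PairwiseDisjoint
      fun c ↦ (supp c).erase v := by
  intro a ha b hb hab
  rw [mem_coe, mem_filter] at ha hb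
  have hinter := hC.card_supp_inter_add_two_le ha.1 hb.1 hab
  refine disjoint_left.2 fun i hia hib ↦ (mem_erase.1 hia).1 ?_
  exact card_le_one.1 (by omega : #(supp a ∩ supp b) ≤ 1)
    i (mem_inter.2 ⟨mem_of_mem_erase hia, mem_of_mem_erase hib⟩) v (mem_inter.2 ⟨ha.2.2, hb.2.2⟩)

lemma sum_wt_sub_one_through_le (hC : IsZCode C) (v : Fin n) :
    ∑ c ∈ C with wt c ≤ 3 ∧ v ∈ supp c, (wt c - 1) ≤ n - 1 := by
  calc ∑ c ∈ C with wt c ≤ 3 ∧ v ∈ supp c, (wt c - 1)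
      = ∑ c ∈ C with wt c ≤ 3 ∧ v ∈ supp c, #((supp c).erase v) :=
        sum_congr rfl fun c hc ↦ (card_erase_of_mem (mem_filter.1 hc).2.2).symm
    _ = #({c ∈ C | wt c ≤ 3 ∧ v ∈ supp c}.biUnion fun c ↦ (supp c).erase v) :=
        (card_biUnion (hC.pairwiseDisjoint_supp_erase_wt_le_three v)).symm
    _ ≤ #((univ : Finset (Fin n)).erase v) :=
        card_le_card (biUnion_subset.2 fun c _ ↦ erase_subset_erase v (subset_univ _))
    _ = n - 1 := by simp

lemma card_wt_two_or_three_through_le (hC : IsZCode C) (v : Fin n) :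
    #{c ∈ C | (wt c = 2 ∨ wt c = 3) ∧ v ∈ supp c} ≤ n / 2 := by
  have htwice : 2 * #{c ∈ C | (wt c = 2 ∨ wt c = 3) ∧ v ∈ supp c} ≤
      ∑ c ∈ C with wt c ≤ 3 ∧ v ∈ supp c, (wt c - 1) + #{c ∈ C | wt c ≤ 2 ∧ v ∈ supp c} := by
    simp only [card_filter, sum_filter, mul_sum, ← sum_add_distrib]
    refine sum_le_sum fun c _ ↦ ?_
    grind
  have hsum := hC.sum_wt_sub_one_through_le v
  have htwo := hC.card_wt_le_two_through_le_one v
  have hn := v.pos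
  omega

lemma two_mul_card_wt_two_le (hC : IsZCode C) : 2 * #{c ∈ C | wt c = 2} ≤ n := by
  calc 2 * #{c ∈ C | wt c = 2}
      = ∑ c ∈ C with wt c = 2, wt c := (sum_filter_wt_eq C 2 fun w ↦ w).symm
    _ ≤ n * 1 := sum_wt_le_of_card_through_le fun v ↦ by
        refine (card_le_card ?_).trans (hC.card_wt_le_two_through_le_one v)
        rw [filter_filter]
        exact monotone_filter_right C fun c _ hc ↦ ⟨hc.1.le, hc.2⟩
    _ = n := mul_one n

lemma two_mul_card_wt_two_add_three_mul_card_wt_three_le (hC : IsZCode C) :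
    2 * #{c ∈ C | wt c = 2} + 3 * #{c ∈ C | wt c = 3} ≤ n * (n / 2) := by
  have hdisj : Disjoint {c ∈ C | wt c = 2} {c ∈ C | wt c = 3} :=
    disjoint_filter.2 fun c _ h2 h3 ↦ by omega
  rw [← sum_filter_wt_eq C 2 fun w ↦ w, ← sum_filter_wt_eq C 3 fun w ↦ w,
    ← sum_union hdisj, ← filter_or]
  refine sum_wt_le_of_card_through_le fun v ↦ ?_
  rw [filter_filter]
  exact hC.card_wt_two_or_three_through_le v

end IsZCode

namespace IsZCode

variable {C : Finset (Fin 7 → Bool)}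

lemma card_wt_le_three_le_nine (hC : IsZCode C) : #{c ∈ C | wt c ≤ 3} ≤ 9 := by
  have hone := hC.card_wt_le_one_le_one
  have htwo := hC.two_mul_card_wt_two_le
  have hthree := hC.two_mul_card_wt_two_add_three_mul_card_wt_three_le
  rw [card_filter_wt_le_three]
  omega

lemma light_weight_distribution (hC : IsZCode C) (hlight : #{c ∈ C | wt c ≤ 3} = 9) :
    #{c ∈ C | wt c ≤ 1} = 1 ∧ #{c ∈ C | wt c = 2} = 3 ∧ #{c ∈ C | wt c = 3} = 5 := by
  have hone := hC.card_wt_le_one_le_one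
  have htwo := hC.two_mul_card_wt_two_le
  have hthree := hC.two_mul_card_wt_two_add_three_mul_card_wt_three_le
  rw [card_filter_wt_le_three] at hlight
  omega

lemma sum_light_eq (hC : IsZCode C) (hlight : #{c ∈ C | wt c ≤ 3} = 9) (f : ℕ → ℕ) :
    ∑ c ∈ C with wt c ≤ 3, f (wt c) =
      ∑ c ∈ C with wt c ≤ 1, f (wt c) + f 2 * 3 + f 3 * 5 := by
  obtain ⟨-, htwo, hthree⟩ := hC.light_weight_distribution hlight
  rw [sum_filter_wt_le_three, sum_filter_wt_eq, sum_filter_wt_eq, htwo, hthree]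

lemma six_le_sum_colength_wt_le_one (hC : IsZCode C) (hlight : #{c ∈ C | wt c ≤ 3} = 9) :
    6 ≤ ∑ c ∈ C with wt c ≤ 1, (7 - wt c) := by
  have hsum := card_nsmul_le_sum {c ∈ C | wt c ≤ 1} (fun c ↦ 7 - wt c) 6 fun c hc ↦ by
    have := (mem_filter.1 hc).2
    omega
  rwa [(hC.light_weight_distribution hlight).1, one_nsmul] at hsum

lemma sixty_two_le_sum_wt (hC : IsZCode C) (hcard : #C = 18) : 62 ≤ ∑ c ∈ C, wt c := by
  have hsplit := card_eq_card_light_add_card_compls_light (n := 7) (k := 3) rfl C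
  have hle := hC.card_wt_le_three_le_nine
  have hle' := hC.compls.card_wt_le_three_le_nine
  have hlight : #{c ∈ C | wt c ≤ 3} = 9 := by omega
  have hlight' : #{c ∈ Cᶜˢ | wt c ≤ 3} = 9 := by omega
  rw [sum_eq_sum_light_add_sum_compls_light (n := 7) (k := 3) rfl C fun w ↦ w,
    hC.sum_light_eq hlight fun w ↦ w, hC.compls.sum_light_eq hlight' fun w ↦ 7 - w]
  have hsix := hC.compls.six_le_sum_colength_wt_le_one hlight'
  omega

end IsZCode

theorem free_points_upper_bound_length_7 :
    ∀ C : Finset (Fin 7 → Bool), IsZCode C → C.card = 18 → freeCount C ≤ 48 := by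
  intro C hC hcard
  have hwt := hC.sixty_two_le_sum_wt hcard
  have hcount := hC.freeCount_add_sum_wt_add_card
  omega
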